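/- Let b = (b₁,b₂) ∈ ℤ² be of type 0 (b₁ ≠ 0, b₂ ≠ 0, b₀ := b₁ − kb₂ ≠ 0) and set b' := (b₁ − kb₂, −b₂). Then b' is also of type 0, and f_b(u) = f_{b'}(u) for every real u. -/

import Mathlib

noncomputable section

/-- `λ = τ - kσ`, the area parameter of the second section of the Hirzebruch surface. -/
def lamH (k : ℤ) (σ τ : ℝ) : ℝ := τ - (k : ℝ) * σ

/-- First coordinate of the centroid of the moment trapezoid with vertices
`(0,0), (σ,0), (0,τ), (σ,λ)`. -/
def c₁H (k : ℤ) (σ τ : ℝ) : ℝ := σ * (τ + 2 * lamH k σ τ) / (3 * (τ + lamH k σ τ))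

/-- Second coordinate of the centroid of the moment trapezoid. -/
def c₂H (k : ℤ) (σ τ : ℝ) : ℝ :=
  (τ ^ 2 + τ * lamH k σ τ + lamH k σ τ ^ 2) / (3 * (τ + lamH k σ τ))

/-- `q_b = c₁ b₁ + c₂ b₂`. -/
def qH (k : ℤ) (σ τ : ℝ) (b₁ b₂ : ℤ) : ℝ :=
  c₁H k σ τ * (b₁ : ℝ) + c₂H k σ τ * (b₂ : ℝ)

/-- `f_b(u) = u² S_{ψ_b}(u)` for `b = (b₁,b₂)` of type 0 on the Hirzebruch surface. -/
def fH (k : ℤ) (σ τ : ℝ) (b₁ b₂ : ℤ) (u : ℝ) : ℝ :=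
  Real.exp (qH k σ τ b₁ b₂ * u) *
    (1 / ((b₁ : ℝ) * (b₂ : ℝ))
      - Real.exp (-(τ * (b₂ : ℝ) * u)) / (((b₁ : ℝ) - (k : ℝ) * (b₂ : ℝ)) * (b₂ : ℝ))
      - Real.exp (-(σ * (b₁ : ℝ) * u)) / ((b₁ : ℝ) * (b₂ : ℝ))
      + Real.exp (-((τ * (b₂ : ℝ) + σ * ((b₁ : ℝ) - (k : ℝ) * (b₂ : ℝ))) * u)) /
          (((b₁ : ℝ) - (k : ℝ) * (b₂ : ℝ)) * (b₂ : ℝ)))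

/-- `b = (b₁,b₂)` is of type 0: `b₁ ≠ 0`, `b₂ ≠ 0` and `b₀ = b₁ - k b₂ ≠ 0`. -/
def IsType0 (k b₁ b₂ : ℤ) : Prop := b₁ ≠ 0 ∧ b₂ ≠ 0 ∧ b₁ - k * b₂ ≠ 0

end

/-!
The map `A (x, y) = (x, τ - k x - y)` is an affine symmetry of the moment trapezoid: it exchanges
the vertices `(0, 0) ↔ (0, τ)` and `(σ, 0) ↔ (σ, λ)`, hence fixes the centroid `c`. Since
`b ⬝ A v = b' ⬝ v + τ b₂`, the exponents `(b ⬝ (c - v)) u` of the localization formula at the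
vertices `v` are permuted when `b` is replaced by `b'`, and so are the products of weights.
-/

theorem IsType0.sub_mul_neg {k b₁ b₂ : ℤ} (hb : IsType0 k b₁ b₂) :
    IsType0 k (b₁ - k * b₂) (-b₂) := by
  obtain ⟨hb₁, hb₂, hb₀⟩ := hb
  exact ⟨hb₀, neg_ne_zero.mpr hb₂, by simpa using hb₁⟩

theorem fH_eq_sum_exp_div (k : ℤ) (σ τ : ℝ) (b₁ b₂ : ℤ) (u : ℝ) :
    fH k σ τ b₁ b₂ u =
      Real.exp (qH k σ τ b₁ b₂ * u) / (b₁ * b₂)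
        - Real.exp ((qH k σ τ b₁ b₂ - τ * b₂) * u) / ((b₁ - k * b₂) * b₂)
        - Real.exp ((qH k σ τ b₁ b₂ - σ * b₁) * u) / (b₁ * b₂)
        + Real.exp ((qH k σ τ b₁ b₂ - (τ * b₂ + σ * (b₁ - k * b₂))) * u) /
            ((b₁ - k * b₂) * b₂) := by
  simp only [fH, sub_mul (qH k σ τ b₁ b₂), sub_eq_add_neg (qH k σ τ b₁ b₂ * u), Real.exp_add]
  ring

section Reflection

variable {k : ℤ} {σ τ : ℝ}

/-- Equivalently, the symmetry `A` fixes the centroid. -/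
theorem mul_c₁H_add_two_mul_c₂H (h : τ + lamH k σ τ ≠ 0) :
    k * c₁H k σ τ + 2 * c₂H k σ τ = τ := by
  have mul_σ_eq : k * σ = τ - lamH k σ τ := (sub_sub_cancel _ _).symm
  unfold c₁H c₂H
  field_simp
  linear_combination (τ + 2 * lamH k σ τ) * mul_σ_eq

theorem qH_sub_mul_neg (h : τ + lamH k σ τ ≠ 0) (b₁ b₂ : ℤ) :
    qH k σ τ (b₁ - k * b₂) (-b₂) = qH k σ τ b₁ b₂ - τ * b₂ := by
  unfold qH
  push_cast
  linear_combination -(b₂ : ℝ) * mul_c₁H_add_two_mul_c₂H h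

theorem fH_sub_mul_neg (h : τ + lamH k σ τ ≠ 0) (b₁ b₂ : ℤ) (u : ℝ) :
    fH k σ τ (b₁ - k * b₂) (-b₂) u = fH k σ τ b₁ b₂ u := by
  set q := qH k σ τ b₁ b₂ with q_def
  have sub_mul_neg_fst : (b₁ : ℝ) - k * b₂ - k * -b₂ = b₁ := by ring
  have exponent_zero_τ : q - τ * b₂ - τ * -b₂ = q := by ring
  have exponent_σ_zero :
      q - τ * b₂ - σ * (b₁ - k * b₂) = q - (τ * b₂ + σ * (b₁ - k * b₂)) := by ring
  have exponent_σ_lam : q - τ * b₂ - (τ * -b₂ + σ * b₁) = q - σ * b₁ := by ring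
  rw [fH_eq_sum_exp_div, fH_eq_sum_exp_div, qH_sub_mul_neg h, ← q_def]
  push_cast
  rw [sub_mul_neg_fst, exponent_zero_τ, exponent_σ_zero, exponent_σ_lam]
  simp only [mul_neg, div_neg]
  ring

end Reflection

/-- The implication (a) ⟹ (c) of Theorem 1.7 for type-0 elements (consistent with
Proposition 3.2 of the paper): for `b = (b₁,b₂)` of type 0 and `b' = (b₁ - k b₂, -b₂)`,
`b'` is of type 0 and `f_b = f_{b'}` as functions on `ℝ`. -/
theorem hirzebruch_type0_equiv_implies_S_eq
    (k : ℤ) (hk : k ≠ 0) (σ τ : ℝ) (hσ : 0 < σ) (hτ : 0 < τ) (hlam : 0 < lamH k σ τ)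
    (b₁ b₂ : ℤ) (hb : IsType0 k b₁ b₂) :
    IsType0 k (b₁ - k * b₂) (-b₂) ∧
      ∀ u : ℝ, fH k σ τ b₁ b₂ u = fH k σ τ (b₁ - k * b₂) (-b₂) u := by
  have sum_ne_zero : τ + lamH k σ τ ≠ 0 := (add_pos hτ hlam).ne'
  exact ⟨hb.sub_mul_neg, fun u ↦ (fH_sub_mul_neg sum_ne_zero b₁ b₂ u).symm⟩
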